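/- Suppose γ > 0 and μ* ∈ ℝ^n has μ*_i > 0 for all i and Σ_i μ*_i = 1. If there exists λ ∈ ℝ such that g_i(μ*) + γ(log μ*_i + 1) = λ for every i (the Lagrangian stationarity condition), then μ* is a global minimizer of J over the probability simplex: J(μ*) ≤ J(μ) for every μ ∈ ℝ^n with μ_i ≥ 0 for all i and Σ_i μ_i = 1. -/

import Mathlib

/-!
Each term of `J` is either linear in `μ` or a nonnegative multiple of `φ(x) = x log x` evaluated at
a linear function of `μ`, so `J` is convex, and `g i μs + γ (log (μs i) + 1)` is the `i`-th partial
derivative of `J` at `μs`. Applying the tangent line inequality for `φ` (`tangent_le_mul_log`) at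
the positive points `clusterMass C μs k` and `μs i` gives the first-order bound
`J μs + ∑ i, ∂ᵢJ(μs) (μ i - μs i) ≤ J μ`. By stationarity the sum equals
`lam * (∑ i, μ i - ∑ i, μs i)`, which vanishes on the simplex.
-/

open Real BigOperators

/-- `(Cᵀμ)_k = Σ_i C_{ik} μ_i` : the total membership mass of cluster `k`. -/
noncomputable def clusterMass {n K : ℕ} (C : Matrix (Fin n) (Fin K) ℝ)
    (μ : Fin n → ℝ) (k : Fin K) : ℝ :=
  ∑ i, C i k * μ i

/-- The objective `J(μ)` mixing representativity, diversity, ambiguity and cardinality,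
with the convention `0 · log 0 = 0` (note `Real.log 0 = 0` in Mathlib). -/
noncomputable def J {n K : ℕ} (C D : Matrix (Fin n) (Fin K) ℝ)
    (F : Matrix (Fin n) (Fin 2) ℝ) (α β γ : ℝ) (μ : Fin n → ℝ) : ℝ :=
  (∑ i, ∑ k, C i k * D i k * μ i)
  + α * ∑ k, clusterMass C μ k * Real.log (clusterMass C μ k)
  + β * ∑ i, μ i * (F i 0 * Real.log (F i 0) + F i 1 * Real.log (F i 1))
  + γ * ∑ i, μ i * Real.log (μ i)

/-- `g_i(μ) = Σ_k C_{ik} D_{ik} + α Σ_k C_{ik}(log((Cᵀμ)_k)+1)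
      + β (F_{i1} log F_{i1} + F_{i2} log F_{i2})`. -/
noncomputable def g {n K : ℕ} (C D : Matrix (Fin n) (Fin K) ℝ)
    (F : Matrix (Fin n) (Fin 2) ℝ) (α β : ℝ) (μ : Fin n → ℝ) (i : Fin n) : ℝ :=
  (∑ k, C i k * D i k)
  + α * ∑ k, C i k * (Real.log (clusterMass C μ k) + 1)
  + β * (F i 0 * Real.log (F i 0) + F i 1 * Real.log (F i 1))

/-- The tangent line of the convex function `x log x` at a point `y > 0` lies below it on `[0, ∞)`. -/
lemma tangent_le_mul_log {x y : ℝ} (hx : 0 ≤ x) (hy : 0 < y) :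
    y * Real.log y + (Real.log y + 1) * (x - y) ≤ x * Real.log x := by
  rcases hx.eq_or_lt with rfl | hx
  · simp only [zero_mul]
    linarith
  · -- This is `log (y / x) ≤ y / x - 1` multiplied by `x`.
    have h := mul_le_mul_of_nonneg_left (Real.log_le_sub_one_of_pos (div_pos hy hx)) hx.le
    rw [Real.log_div hy.ne' hx.ne', mul_sub, mul_sub, mul_div_cancel₀ _ hx.ne'] at h
    linarith

lemma clusterMass_sub {n K : ℕ} (C : Matrix (Fin n) (Fin K) ℝ) (μ ν : Fin n → ℝ) (k : Fin K) :
    clusterMass C μ k - clusterMass C ν k = ∑ i, C i k * (μ i - ν i) := by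
  simp only [clusterMass, mul_sub, Finset.sum_sub_distrib]

/-- The contribution of the first three terms of `J` to its directional derivative at `ν` along
`μ - ν`, with the diversity term regrouped by clusters. -/
lemma sum_g_mul_sub {n K : ℕ} (C D : Matrix (Fin n) (Fin K) ℝ) (F : Matrix (Fin n) (Fin 2) ℝ)
    (α β : ℝ) (μ ν : Fin n → ℝ) :
    ∑ i, g C D F α β ν i * (μ i - ν i) =
      ((∑ i, ∑ k, C i k * D i k * μ i) - ∑ i, ∑ k, C i k * D i k * ν i)
      + α * ∑ k, (Real.log (clusterMass C ν k) + 1) * (clusterMass C μ k - clusterMass C ν k)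
      + (β * ∑ i, μ i * (F i 0 * Real.log (F i 0) + F i 1 * Real.log (F i 1))
        - β * ∑ i, ν i * (F i 0 * Real.log (F i 0) + F i 1 * Real.log (F i 1))) := by
  have hdiv : ∑ k, (Real.log (clusterMass C ν k) + 1) * (clusterMass C μ k - clusterMass C ν k) =
      ∑ i, (∑ k, C i k * (Real.log (clusterMass C ν k) + 1)) * (μ i - ν i) := by
    simp only [clusterMass_sub, Finset.mul_sum, Finset.sum_mul]
    rw [Finset.sum_comm]
    refine Finset.sum_congr rfl fun i _ => Finset.sum_congr rfl fun k _ => ?_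
    ring
  rw [hdiv, ← mul_sub, ← Finset.sum_sub_distrib, ← Finset.sum_sub_distrib, Finset.mul_sum,
    Finset.mul_sum, ← Finset.sum_add_distrib, ← Finset.sum_add_distrib]
  refine Finset.sum_congr rfl fun i _ => ?_
  rw [← Finset.sum_mul, ← Finset.sum_mul, g]
  ring

theorem stmt12 {n K : ℕ} (hn : 0 < n) (hK : 0 < K)
    (C D : Matrix (Fin n) (Fin K) ℝ) (F : Matrix (Fin n) (Fin 2) ℝ)
    (f : Fin n → ℝ) (α β γ : ℝ)
    (hC01 : ∀ i k, C i k = 0 ∨ C i k = 1)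
    (hCrow : ∀ i, ∃! k, C i k = 1)
    (hD : ∀ i k, 0 ≤ D i k)
    (hf : ∀ i, 0 ≤ f i ∧ f i ≤ 1)
    (hF : ∀ i, F i 0 = f i ∧ F i 1 = 1 - f i)
    (hα : 0 ≤ α) (hβ : 0 ≤ β) (hγ : 0 < γ)
    (hclus : ∀ k, ∃ i, C i k = 1)
    (μs : Fin n → ℝ) (hμpos : ∀ i, 0 < μs i) (hμsum : ∑ i, μs i = 1)
    (hstat : ∃ lam : ℝ, ∀ i, g C D F α β μs i + γ * (Real.log (μs i) + 1) = lam) :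
    ∀ μ : Fin n → ℝ, (∀ i, 0 ≤ μ i) → (∑ i, μ i = 1) →
      J C D F α β γ μs ≤ J C D F α β γ μ := by
  obtain ⟨lam, hlam⟩ := hstat
  intro μ hμ hμ1
  have hC : ∀ i k, 0 ≤ C i k := fun i k => by rcases hC01 i k with h | h <;> simp [h]
  have hmass : ∀ k, 0 ≤ clusterMass C μ k := fun k =>
    Finset.sum_nonneg fun i _ => mul_nonneg (hC i k) (hμ i)
  -- Nonempty clusters have positive mass, so `x log x` is differentiable at `clusterMass C μs k`.
  have hmasspos : ∀ k, 0 < clusterMass C μs k := fun k => by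
    obtain ⟨i, hi⟩ := hclus k
    exact Finset.sum_pos' (fun j _ => mul_nonneg (hC j k) (hμpos j).le)
      ⟨i, Finset.mem_univ i, by simpa [hi] using hμpos i⟩
  have hdiv := mul_le_mul_of_nonneg_left (Finset.sum_le_sum fun k (_ : k ∈ Finset.univ) =>
    tangent_le_mul_log (hmass k) (hmasspos k)) hα
  have hcard := mul_le_mul_of_nonneg_left (Finset.sum_le_sum fun i (_ : i ∈ Finset.univ) =>
    tangent_le_mul_log (hμ i) (hμpos i)) hγ.le
  rw [Finset.sum_add_distrib, mul_add] at hdiv hcard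
  have hzero : ∑ i, g C D F α β μs i * (μ i - μs i)
      + γ * ∑ i, (Real.log (μs i) + 1) * (μ i - μs i) = 0 := by
    calc _ = ∑ i, lam * (μ i - μs i) := by
          rw [Finset.mul_sum, ← Finset.sum_add_distrib]
          refine Finset.sum_congr rfl fun i _ => ?_
          rw [← hlam i]
          ring
      _ = 0 := by rw [← Finset.mul_sum, Finset.sum_sub_distrib, hμ1, hμsum, sub_self, mul_zero]
  rw [sum_g_mul_sub] at hzero
  unfold J
  linarith
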